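/- arXiv:2403.15998 — 4 statements merged into one kernel-verified Lean document; each statement's English description precedes it below -/
import Mathlib

section
/- Consider the closed-loop target system on (t,x) ∈ [0,∞)×[0,L]: ∂_t ψ_i + γ_i ∂_x ψ_i = Σ_{j=1}^3 σ_{ij} ψ_j + Σ_{j=1}^3 ∫_0^x c_{ij}(x,ξ) ψ_j(t,ξ) dξ + ∫_0^x κ_i(x,ξ) χ(t,ξ) dξ for i = 1,2,3, and ∂_t χ − μ ∂_x χ = 0, with boundary conditions ψ_i(t,0) = δ_i χ(t,0) and χ(t,L) = 0. Then there exist constants M > 0 and λ > 0, depending only on L, γ_1, γ_2, γ_3, μ, the σ_{ij}, the δ_i and the kernels c_{ij}, κ_i, such that every C¹ solution (ψ_1, ψ_2, ψ_3, χ) satisfies Σ_{i=1}^3 ‖ψ_i(t,·)‖² + ‖χ(t,·)‖² ≤ M e^{−λ t} ( Σ_{i=1}^3 ‖ψ_i(0,·)‖² + ‖χ(0,·)‖² ) for all t ≥ 0; that is, the target system is exponentially stable in the L² sense. -/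
/-!
The proof is a Lyapunov argument. For `θ, B > 0` put

`V(t) = ∑ i, ∫ e^{-θ x} ψ i (t,x)² dx + B ∫ e^x χ(t,x)² dx`.

Differentiating under the integral sign, inserting the equations and integrating by parts in `x`
(`hasDerivAt_energy`) gives, with `W` and `X` the two weighted energies,

`V' ≤ (∑ i, γ i (δ i)² - B μ) χ(t,0)² - θ (min γ) W - B μ X + (coupling terms)`.

The Volterra structure of the coupling matters: since the integrals run over `ξ ≤ x` only and
`e^{-θ x} ≤ e^{-θ ξ}` there, the coupling terms are at most `C (W + X)` with `C` **independent of
`θ`** (`work_le`). Hence one may take first `θ`, then `B`, large enough to absorb both the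
coupling and the boundary term, so that `V' ≤ -(W + X) ≤ -λ V`. Grönwall's inequality and the
equivalence of `V` with the `L²` energy finish the proof.
-/

open Set intervalIntegral
open MeasureTheory (volume)

/-! ### Differentiating a weighted energy -/

/-- Partial derivative in time, as a value of the Fréchet derivative. -/
lemma hasDerivAt_time {u : ℝ → ℝ → ℝ} (hu : ContDiff ℝ 1 (Function.uncurry u)) (t x : ℝ) :
    HasDerivAt (fun τ => u τ x) (fderiv ℝ (Function.uncurry u) (t, x) (1, 0)) t := by
  have h := (hu.differentiable one_ne_zero (t, x)).hasFDerivAt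
  exact h.comp_hasDerivAt (f := fun τ : ℝ => (τ, x)) t
    ((hasDerivAt_id t).prodMk (hasDerivAt_const t x))

/-- Partial derivative in space, as a value of the Fréchet derivative. -/
lemma hasDerivAt_space {u : ℝ → ℝ → ℝ} (hu : ContDiff ℝ 1 (Function.uncurry u)) (t x : ℝ) :
    HasDerivAt (fun y => u t y) (fderiv ℝ (Function.uncurry u) (t, x) (0, 1)) x := by
  have h := (hu.differentiable one_ne_zero (t, x)).hasFDerivAt
  exact h.comp_hasDerivAt (f := fun y : ℝ => (t, y)) x
    ((hasDerivAt_const x t).prodMk (hasDerivAt_id x))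

lemma continuous_deriv_time {u : ℝ → ℝ → ℝ} (hu : ContDiff ℝ 1 (Function.uncurry u)) :
    Continuous (fun p : ℝ × ℝ => deriv (fun τ => u τ p.2) p.1) := by
  simp_rw [fun p : ℝ × ℝ => (hasDerivAt_time hu p.1 p.2).deriv]
  exact (hu.continuous_fderiv one_ne_zero).clm_apply continuous_const

lemma continuous_deriv_space {u : ℝ → ℝ → ℝ} (hu : ContDiff ℝ 1 (Function.uncurry u)) :
    Continuous (fun p : ℝ × ℝ => deriv (fun y => u p.1 y) p.2) := by
  simp_rw [fun p : ℝ × ℝ => (hasDerivAt_space hu p.1 p.2).deriv]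
  exact (hu.continuous_fderiv one_ne_zero).clm_apply continuous_const

/-- Differentiation under the integral sign for the energy of weight `e^{a x}`. -/
lemma hasDerivAt_integral_sq {L : ℝ} {u : ℝ → ℝ → ℝ}
    (hu : ContDiff ℝ 1 (Function.uncurry u)) (a t : ℝ) :
    HasDerivAt (fun s => ∫ x in (0:ℝ)..L, Real.exp (a * x) * u s x ^ 2)
      (∫ x in (0:ℝ)..L, Real.exp (a * x) * (2 * u t x * deriv (fun τ => u τ x) t)) t := by
  have hc : Continuous (Function.uncurry u) := hu.continuous
  have hct := continuous_deriv_time hu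
  have hF' : Continuous (fun p : ℝ × ℝ =>
      Real.exp (a * p.2) * (2 * u p.1 p.2 * deriv (fun τ => u τ p.2) p.1)) := by
    have : Continuous (fun p : ℝ × ℝ => u p.1 p.2) := hc
    fun_prop
  have hus : ∀ s, Continuous (fun x => u s x) := fun s =>
    hc.comp (Continuous.prodMk_right s)
  obtain ⟨C, hC⟩ := ((isCompact_Icc (a := t - 1) (b := t + 1)).prod
    (isCompact_uIcc (a := (0:ℝ)) (b := L))).exists_bound_of_continuousOn hF'.continuousOn
  refine (intervalIntegral.hasDerivAt_integral_of_dominated_loc_of_deriv_le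
    (F := fun s x => Real.exp (a * x) * u s x ^ 2)
    (F' := fun s x => Real.exp (a * x) * (2 * u s x * deriv (fun τ => u τ x) s))
    (s := Icc (t - 1) (t + 1)) (bound := fun _ => C)
    (Icc_mem_nhds (by linarith) (by linarith)) ?_ ?_ ?_ ?_ (by simp) ?_).2
  · refine Filter.Eventually.of_forall fun s => ?_
    have := hus s
    exact (by fun_prop : Continuous fun x => Real.exp (a * x) * u s x ^ 2).aestronglyMeasurable
  · have := hus t
    exact (by fun_prop : Continuous fun x => Real.exp (a * x) * u t x ^ 2).intervalIntegrable _ _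
  · exact (hF'.comp (Continuous.prodMk_right t)).aestronglyMeasurable
  · exact Filter.Eventually.of_forall fun x hx s hs => hC (s, x) ⟨hs, uIoc_subset_uIcc hx⟩
  · refine Filter.Eventually.of_forall fun x _ s _ => ?_
    have h := ((hasDerivAt_time hu s x).differentiableAt.hasDerivAt.pow 2).const_mul
      (Real.exp (a * x))
    simpa using h

/-- Energy identity: with `S = u_t + v u_x`, the energy of weight `e^{a x}` changes through the
boundary fluxes, the weight, and the work of the source `S`. -/
lemma hasDerivAt_energy {L : ℝ} {u : ℝ → ℝ → ℝ}
    (hu : ContDiff ℝ 1 (Function.uncurry u)) (a v t : ℝ) :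
    HasDerivAt (fun s => ∫ x in (0:ℝ)..L, Real.exp (a * x) * u s x ^ 2)
      (v * (u t 0 ^ 2 - Real.exp (a * L) * u t L ^ 2
          + a * ∫ x in (0:ℝ)..L, Real.exp (a * x) * u t x ^ 2)
        + ∫ x in (0:ℝ)..L, Real.exp (a * x) * (2 * u t x *
            (deriv (fun τ => u τ x) t + v * deriv (fun y => u t y) x))) t := by
  convert hasDerivAt_integral_sq (L := L) hu a t using 1
  have h0 : Continuous (fun x => u t x) := hu.continuous.comp (Continuous.prodMk_right t)
  have h1 : Continuous (fun x => deriv (fun τ => u τ x) t) :=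
    (continuous_deriv_time hu).comp (Continuous.prodMk_right t)
  have h2 : Continuous (fun x => deriv (fun y => u t y) x) :=
    (continuous_deriv_space hu).comp (Continuous.prodMk_right t)
  have hftc : ∫ x in (0:ℝ)..L, (a * (Real.exp (a * x) * u t x ^ 2)
      + Real.exp (a * x) * (2 * u t x * deriv (fun y => u t y) x))
      = Real.exp (a * L) * u t L ^ 2 - u t 0 ^ 2 := by
    rw [integral_eq_sub_of_hasDerivAt (f := fun x => Real.exp (a * x) * u t x ^ 2)]
    · simp
    · intro x _
      have e1 : HasDerivAt (fun x => Real.exp (a * x)) (Real.exp (a * x) * a) x := by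
        simpa using ((hasDerivAt_id x).const_mul a).exp
      have e2 := (hasDerivAt_space hu t x).differentiableAt.hasDerivAt.pow 2
      refine (e1.mul e2).congr_deriv ?_
      simp
      ring
    · exact Continuous.intervalIntegrable (by fun_prop) _ _
  rw [integral_add (Continuous.intervalIntegrable (by fun_prop) _ _)
    (Continuous.intervalIntegrable (by fun_prop) _ _), integral_const_mul] at hftc
  have hsplit : ∫ x in (0:ℝ)..L, Real.exp (a * x) * (2 * u t x *
            (deriv (fun τ => u τ x) t + v * deriv (fun y => u t y) x))
      = (∫ x in (0:ℝ)..L, Real.exp (a * x) * (2 * u t x * deriv (fun τ => u τ x) t))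
        + v * ∫ x in (0:ℝ)..L, Real.exp (a * x) * (2 * u t x * deriv (fun y => u t y) x) := by
    rw [← integral_const_mul, ← integral_add (Continuous.intervalIntegrable (by fun_prop) _ _)
      (Continuous.intervalIntegrable (by fun_prop) _ _)]
    congr 1
    ext x
    ring
  rw [hsplit]
  linear_combination v * hftc

/-! ### Estimating the coupling terms -/

/-- Cauchy–Schwarz against the constant function `1`. -/
lemma sq_integral_abs_le {f : ℝ → ℝ} (hf : Continuous f) {x : ℝ} (hx : 0 ≤ x) :
    (∫ ξ in (0:ℝ)..x, |f ξ|) ^ 2 ≤ x * ∫ ξ in (0:ℝ)..x, f ξ ^ 2 := by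
  rcases hx.eq_or_lt with rfl | hx
  · simp
  set A := ∫ ξ in (0:ℝ)..x, |f ξ| with hA
  -- `x |f| - A` is `x` times the deviation of `|f|` from its mean
  have h : 0 ≤ ∫ ξ in (0:ℝ)..x, (x * |f ξ| - A) ^ 2 :=
    integral_nonneg hx.le fun _ _ => sq_nonneg _
  have e : ∫ ξ in (0:ℝ)..x, (x * |f ξ| - A) ^ 2
      = x ^ 2 * (∫ ξ in (0:ℝ)..x, f ξ ^ 2) - 2 * x * A * A + x * A ^ 2 := by
    have : ∀ ξ, (x * |f ξ| - A) ^ 2 = x ^ 2 * f ξ ^ 2 - 2 * x * A * |f ξ| + A ^ 2 := by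
      intro ξ
      rw [← sq_abs (f ξ)]
      ring
    simp_rw [this]
    rw [integral_add (Continuous.intervalIntegrable (by fun_prop) _ _) (by simp),
      integral_sub (Continuous.intervalIntegrable (by fun_prop) _ _)
        (Continuous.intervalIntegrable (by fun_prop) _ _), integral_const_mul, integral_const_mul]
    simp [← hA]
  rw [e] at h
  have hpos : 0 ≤ x * (x * (∫ ξ in (0:ℝ)..x, f ξ ^ 2) - A ^ 2) := by linarith
  linarith [nonneg_of_mul_nonneg_right hpos hx]

/-- A decreasing weight may be moved inside a Volterra integral: this is what makes the constants
below independent of `θ`. -/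
lemma exp_mul_sq_integral_le {L θ : ℝ} (hθ : 0 ≤ θ) {f : ℝ → ℝ} (hf : Continuous f) {x : ℝ}
    (hx : 0 ≤ x) (hxL : x ≤ L) :
    Real.exp (-θ * x) * (∫ ξ in (0:ℝ)..x, |f ξ|) ^ 2
      ≤ L * ∫ ξ in (0:ℝ)..L, Real.exp (-θ * ξ) * f ξ ^ 2 := by
  have hi : ∀ a b, IntervalIntegrable (fun ξ => Real.exp (-θ * ξ) * f ξ ^ 2) volume a b :=
    fun a b => Continuous.intervalIntegrable (by fun_prop) _ _
  calc _ ≤ Real.exp (-θ * x) * (x * ∫ ξ in (0:ℝ)..x, f ξ ^ 2) :=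
        mul_le_mul_of_nonneg_left (sq_integral_abs_le hf hx) (Real.exp_nonneg _)
    _ = x * ∫ ξ in (0:ℝ)..x, Real.exp (-θ * x) * f ξ ^ 2 := by
        rw [integral_const_mul]; ring
    _ ≤ x * ∫ ξ in (0:ℝ)..x, Real.exp (-θ * ξ) * f ξ ^ 2 := by
        refine mul_le_mul_of_nonneg_left (integral_mono_on hx
          (Continuous.intervalIntegrable (by fun_prop) _ _) (hi _ _) fun ξ hξ => ?_) hx
        refine mul_le_mul_of_nonneg_right (Real.exp_le_exp.2 ?_) (sq_nonneg _)
        nlinarith [hξ.2]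
    _ ≤ L * ∫ ξ in (0:ℝ)..L, Real.exp (-θ * ξ) * f ξ ^ 2 := by
        refine mul_le_mul hxL ?_ (integral_nonneg hx fun _ _ => by positivity) (hx.trans hxL)
        rw [← integral_add_adjacent_intervals (hi 0 x) (hi x L)]
        linarith [integral_nonneg (μ := volume) (f := fun ξ => Real.exp (-θ * ξ) * f ξ ^ 2) hxL
          fun _ _ => by positivity]

/-- A source bounded by local and Volterra terms does work at most `C (W + X)`, where `W`, `X` are
the weighted energies of `f`, `h`; the factor in front of them does not depend on `θ`. -/
lemma work_le {L θ K : ℝ} (hL : 0 < L) (hθ : 0 ≤ θ) {f : Fin 3 → ℝ → ℝ}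
    (hf : ∀ j, Continuous (f j)) {h S : ℝ → ℝ} (hh : Continuous h) (hS : Continuous S) (i : Fin 3)
    (hb : ∀ x ∈ Icc 0 L, |S x| ≤ K * ((∑ j, |f j x|) + (∑ j, ∫ ξ in (0:ℝ)..x, |f j ξ|)
      + ∫ ξ in (0:ℝ)..x, |h ξ|)) :
    ∫ x in (0:ℝ)..L, Real.exp (-θ * x) * (2 * f i x * S x)
      ≤ (∫ x in (0:ℝ)..L, Real.exp (-θ * x) * f i x ^ 2)
        + 9 * K ^ 2 * ((1 + L ^ 2) * (∑ j, ∫ x in (0:ℝ)..L, Real.exp (-θ * x) * f j x ^ 2)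
          + L ^ 2 * ∫ x in (0:ℝ)..L, h x ^ 2) := by
  set W : Fin 3 → ℝ := fun j => ∫ x in (0:ℝ)..L, Real.exp (-θ * x) * f j x ^ 2 with hW
  set X := ∫ x in (0:ℝ)..L, h x ^ 2 with hX
  have hXθ : ∫ x in (0:ℝ)..L, Real.exp (-θ * x) * h x ^ 2 ≤ X := by
    refine integral_mono_on hL.le (Continuous.intervalIntegrable (by fun_prop) _ _)
      (Continuous.intervalIntegrable (by fun_prop) _ _) fun x hx => ?_
    have : Real.exp (-θ * x) ≤ 1 := Real.exp_le_one_iff.2 (by nlinarith [hx.1])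
    nlinarith [sq_nonneg (h x)]
  have hpt : ∀ x ∈ Icc 0 L, Real.exp (-θ * x) * (2 * f i x * S x)
      ≤ Real.exp (-θ * x) * f i x ^ 2
        + 9 * K ^ 2 * ((∑ j, Real.exp (-θ * x) * f j x ^ 2) + L * (∑ j, W j) + L * X) := by
    intro x hx
    have hE := Real.exp_pos (-θ * x)
    set E := Real.exp (-θ * x) with hEdef
    have c1 := fun j => exp_mul_sq_integral_le hθ (hf j) hx.1 hx.2
    have c2 := (exp_mul_sq_integral_le hθ hh hx.1 hx.2).trans
      (mul_le_mul_of_nonneg_left hXθ hL.le)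
    have hSx := hb x hx
    rw [← hEdef] at c2
    simp only [← hEdef] at c1
    change ∀ j, _ ≤ L * W j at c1
    generalize (∫ ξ in (0:ℝ)..x, |h ξ|) = d at *
    obtain ⟨b, hbdef⟩ : ∃ b : Fin 3 → ℝ, ∀ j, b j = ∫ ξ in (0:ℝ)..x, |f j ξ| :=
      ⟨_, fun _ => rfl⟩
    simp only [← hbdef] at c1 hSx
    have hA : (∑ j, |f j x|) ^ 2 ≤ 3 * ∑ j, f j x ^ 2 := by
      simpa using sq_sum_le_card_mul_sum_sq (s := Finset.univ) (f := fun j => |f j x|)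
    have hB : (∑ j, b j) ^ 2 ≤ 3 * ∑ j, b j ^ 2 := by
      simpa using sq_sum_le_card_mul_sum_sq (s := Finset.univ) (f := b)
    have hS2 : S x ^ 2 ≤ 9 * K ^ 2 * ((∑ j, f j x ^ 2) + (∑ j, b j ^ 2) + d ^ 2) := by
      have h1 := sq_le_sq' (by linarith [neg_abs_le (S x), abs_nonneg (S x)]) hSx
      rw [sq_abs, mul_pow] at h1
      have h2 : ((∑ j, |f j x|) + (∑ j, b j) + d) ^ 2
          ≤ 9 * ((∑ j, f j x ^ 2) + (∑ j, b j ^ 2) + d ^ 2) := by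
        nlinarith [sq_nonneg ((∑ j, |f j x|) - ∑ j, b j), sq_nonneg ((∑ j, |f j x|) - d),
          sq_nonneg ((∑ j, b j) - d), sq_nonneg d]
      nlinarith [mul_le_mul_of_nonneg_left h2 (sq_nonneg K)]
    have hB' : ∑ j, E * b j ^ 2 ≤ L * ∑ j, W j := by
      rw [Finset.mul_sum]
      exact Finset.sum_le_sum fun j _ => c1 j
    rw [← Finset.mul_sum] at hB' ⊢
    have h3 : E * (2 * f i x * S x) ≤ E * (f i x ^ 2 + S x ^ 2) :=
      mul_le_mul_of_nonneg_left (by nlinarith [sq_nonneg (f i x - S x)]) hE.le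
    have h4 := mul_le_mul_of_nonneg_left hS2 hE.le
    have h5 := mul_le_mul_of_nonneg_left (add_le_add hB' c2) (by positivity : 0 ≤ 9 * K ^ 2)
    nlinarith
  have hii : ∀ j, IntervalIntegrable (fun x => Real.exp (-θ * x) * f j x ^ 2) volume 0 L := by
    intro j
    have := hf j
    exact Continuous.intervalIntegrable (by fun_prop) _ _
  have hfi := hf i
  have hs : IntervalIntegrable (fun x => ∑ j, Real.exp (-θ * x) * f j x ^ 2) volume 0 L :=
    Continuous.intervalIntegrable (by fun_prop) _ _
  refine (integral_mono_on hL.le (Continuous.intervalIntegrable (by fun_prop) _ _)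
    (Continuous.intervalIntegrable (by fun_prop) _ _) hpt).trans_eq ?_
  rw [integral_add (hii i) (Continuous.intervalIntegrable (by fun_prop) _ _), integral_const_mul,
    integral_add (hs.add (by simp)) (by simp), integral_add hs (by simp),
    integral_finsetSum fun j _ => hii j]
  simp only [integral_const, smul_eq_mul, sub_zero]
  ring

/-- A common bound for all coefficients of the coupling. -/
lemma exists_coeff_bound (L : ℝ) (σ : Fin 3 → Fin 3 → ℝ)
    (c : Fin 3 → Fin 3 → ℝ → ℝ → ℝ) (κ : Fin 3 → ℝ → ℝ → ℝ)
    (hcC : ∀ i j, ContinuousOn (Function.uncurry (c i j))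
      {p : ℝ × ℝ | 0 ≤ p.2 ∧ p.2 ≤ p.1 ∧ p.1 ≤ L})
    (hκC : ∀ i, ContinuousOn (Function.uncurry (κ i))
      {p : ℝ × ℝ | 0 ≤ p.2 ∧ p.2 ≤ p.1 ∧ p.1 ≤ L}) :
    ∃ K : ℝ, (∀ i j, |σ i j| ≤ K) ∧
      (∀ i j x ξ, 0 ≤ ξ → ξ ≤ x → x ≤ L → |c i j x ξ| ≤ K) ∧
      (∀ i x ξ, 0 ≤ ξ → ξ ≤ x → x ≤ L → |κ i x ξ| ≤ K) := by
  have hT : IsCompact {p : ℝ × ℝ | 0 ≤ p.2 ∧ p.2 ≤ p.1 ∧ p.1 ≤ L} := by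
    refine ((isCompact_Icc (a := (0:ℝ)) (b := L)).prod
      (isCompact_Icc (a := (0:ℝ)) (b := L))).of_isClosed_subset ?_ ?_
    · exact (isClosed_le continuous_const continuous_snd).inter
        ((isClosed_le continuous_snd continuous_fst).inter
          (isClosed_le continuous_fst continuous_const))
    · rintro ⟨x, ξ⟩ ⟨h1, h2, h3⟩
      exact ⟨⟨h1.trans h2, h3⟩, ⟨h1, h2.trans h3⟩⟩
  choose Kc hKc using fun i j => hT.exists_bound_of_continuousOn (hcC i j)
  choose Kk hKk using fun i => hT.exists_bound_of_continuousOn (hκC i)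
  obtain ⟨K1, h1⟩ := (finite_range fun p : Fin 3 × Fin 3 => |σ p.1 p.2|).bddAbove
  obtain ⟨K2, h2⟩ := (finite_range fun p : Fin 3 × Fin 3 => Kc p.1 p.2).bddAbove
  obtain ⟨K3, h3⟩ := (finite_range Kk).bddAbove
  refine ⟨max K1 (max K2 K3), fun i j => ?_, fun i j x ξ a b d => ?_, fun i x ξ a b d => ?_⟩
  · exact (h1 ⟨(i, j), rfl⟩).trans (le_max_left _ _)
  · exact (hKc i j (x, ξ) ⟨a, b, d⟩).trans
      ((h2 ⟨(i, j), rfl⟩).trans ((le_max_left _ _).trans (le_max_right _ _)))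
  · exact (hKk i (x, ξ) ⟨a, b, d⟩).trans
      ((h3 ⟨i, rfl⟩).trans ((le_max_right _ _).trans (le_max_right _ _)))

lemma abs_integral_kernel_le {K x : ℝ} {k f : ℝ → ℝ} (hf : Continuous f) (hx : 0 ≤ x)
    (hk : ∀ ξ, 0 ≤ ξ → ξ ≤ x → |k ξ| ≤ K) :
    |∫ ξ in (0:ℝ)..x, k ξ * f ξ| ≤ K * ∫ ξ in (0:ℝ)..x, |f ξ| := by
  rw [← integral_const_mul]
  refine norm_integral_le_of_norm_le (f := fun ξ => k ξ * f ξ) hx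
    (Filter.Eventually.of_forall fun ξ hξ => ?_)
    (Continuous.intervalIntegrable (by fun_prop) _ _)
  rw [Real.norm_eq_abs, abs_mul]
  exact mul_le_mul_of_nonneg_right (hk ξ hξ.1.le hξ.2) (abs_nonneg _)

/-- Pointwise bound for the right-hand side of the equation for `ψ i`. -/
lemma abs_source_le {L K x : ℝ} (hx : x ∈ Icc 0 L) {σ : Fin 3 → ℝ} {c : Fin 3 → ℝ → ℝ → ℝ}
    {κ : ℝ → ℝ → ℝ} (hσ : ∀ j, |σ j| ≤ K)
    (hc : ∀ j x ξ, 0 ≤ ξ → ξ ≤ x → x ≤ L → |c j x ξ| ≤ K)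
    (hκ : ∀ x ξ, 0 ≤ ξ → ξ ≤ x → x ≤ L → |κ x ξ| ≤ K)
    {f : Fin 3 → ℝ → ℝ} (hf : ∀ j, Continuous (f j)) {h : ℝ → ℝ} (hh : Continuous h) :
    |(∑ j, σ j * f j x) + (∑ j, ∫ ξ in (0:ℝ)..x, c j x ξ * f j ξ)
        + ∫ ξ in (0:ℝ)..x, κ x ξ * h ξ|
      ≤ K * ((∑ j, |f j x|) + (∑ j, ∫ ξ in (0:ℝ)..x, |f j ξ|)
        + ∫ ξ in (0:ℝ)..x, |h ξ|) := by
  rw [mul_add, mul_add, Finset.mul_sum, Finset.mul_sum]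
  refine (abs_add_three _ _ _).trans (add_le_add (add_le_add ?_ ?_) ?_)
  · refine (Finset.abs_sum_le_sum_abs _ _).trans (Finset.sum_le_sum fun j _ => ?_)
    rw [abs_mul]
    exact mul_le_mul_of_nonneg_right (hσ j) (abs_nonneg _)
  · exact (Finset.abs_sum_le_sum_abs _ _).trans (Finset.sum_le_sum fun j _ =>
      abs_integral_kernel_le (hf j) hx.1 fun ξ h1 h2 => hc j x ξ h1 h2 hx.2)
  · exact abs_integral_kernel_le hh hx.1 fun ξ h1 h2 => hκ x ξ h1 h2 hx.2

/-! ### Exponential decay -/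

lemma le_exp_of_hasDerivAt_le {V V' : ℝ → ℝ} {lam : ℝ} (hV : ∀ t, HasDerivAt V (V' t) t)
    (h : ∀ t, 0 ≤ t → V' t ≤ -lam * V t) {t : ℝ} (ht : 0 ≤ t) :
    V t ≤ Real.exp (-lam * t) * V 0 := by
  have hd : ∀ t, HasDerivAt (fun t => Real.exp (lam * t) * V t)
      (Real.exp (lam * t) * lam * V t + Real.exp (lam * t) * V' t) t := by
    intro t
    have e1 : HasDerivAt (fun x => Real.exp (lam * x)) (Real.exp (lam * t) * lam) t := by
      simpa using ((hasDerivAt_id t).const_mul lam).exp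
    exact e1.mul (hV t)
  have ha : AntitoneOn (fun t => Real.exp (lam * t) * V t) (Ici 0) := by
    refine antitoneOn_of_deriv_nonpos (convex_Ici 0)
      (fun t _ => (hd t).continuousAt.continuousWithinAt)
      (fun t _ => (hd t).differentiableAt.differentiableWithinAt) fun s hs => ?_
    rw [interior_Ici] at hs
    rw [(hd s).deriv]
    nlinarith [h s (le_of_lt hs), Real.exp_pos (lam * s)]
  have h0 := ha (mem_Ici.2 le_rfl) (mem_Ici.2 ht) ht
  simp only [mul_zero, Real.exp_zero, one_mul] at h0
  rw [neg_mul, Real.exp_neg, ← div_eq_inv_mul, le_div_iff₀ (Real.exp_pos _)]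
  linarith

/-- A weight pinched between two constants pinches the energy. -/
lemma energy_bounds {L m M : ℝ} (hL : 0 < L) {w f : ℝ → ℝ} (hw : Continuous w)
    (hf : Continuous f) (h : ∀ x ∈ Icc 0 L, m ≤ w x ∧ w x ≤ M) :
    m * (∫ x in (0:ℝ)..L, f x ^ 2) ≤ (∫ x in (0:ℝ)..L, w x * f x ^ 2) ∧
      (∫ x in (0:ℝ)..L, w x * f x ^ 2) ≤ M * (∫ x in (0:ℝ)..L, f x ^ 2) := by
  rw [← integral_const_mul, ← integral_const_mul]
  constructor <;>
  refine integral_mono_on hL.le (Continuous.intervalIntegrable (by fun_prop) _ _)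
    (Continuous.intervalIntegrable (by fun_prop) _ _) fun x hx => ?_
  · exact mul_le_mul_of_nonneg_right (h x hx).1 (sq_nonneg _)
  · exact mul_le_mul_of_nonneg_right (h x hx).2 (sq_nonneg _)

theorem closed_loop_target_system_exponential_stability
    (L : ℝ) (hL : 0 < L)
    (γ : Fin 3 → ℝ) (hγ : ∀ i, 0 < γ i)
    (μ : ℝ) (hμ : 0 < μ)
    (σ : Fin 3 → Fin 3 → ℝ) (δ : Fin 3 → ℝ)
    -- kernels c_{ij} and κ_i, continuous on the triangle T = {0 ≤ ξ ≤ x ≤ L}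
    (c : Fin 3 → Fin 3 → ℝ → ℝ → ℝ) (κ : Fin 3 → ℝ → ℝ → ℝ)
    (hcC : ∀ i j, ContinuousOn (Function.uncurry (c i j))
      {p : ℝ × ℝ | 0 ≤ p.2 ∧ p.2 ≤ p.1 ∧ p.1 ≤ L})
    (hκC : ∀ i, ContinuousOn (Function.uncurry (κ i))
      {p : ℝ × ℝ | 0 ≤ p.2 ∧ p.2 ≤ p.1 ∧ p.1 ≤ L}) :
    ∃ M > (0:ℝ), ∃ lam > (0:ℝ),
      ∀ (ψ : Fin 3 → ℝ → ℝ → ℝ) (χ : ℝ → ℝ → ℝ),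
        (∀ i, ContDiff ℝ 1 (Function.uncurry (ψ i))) →
        ContDiff ℝ 1 (Function.uncurry χ) →
        -- interior equations of the target system
        (∀ i, ∀ t x : ℝ, 0 ≤ t → 0 ≤ x → x ≤ L →
          deriv (fun τ => ψ i τ x) t + γ i * deriv (fun y => ψ i t y) x
            = (∑ j, σ i j * ψ j t x)
              + (∑ j, ∫ ξ in (0:ℝ)..x, c i j x ξ * ψ j t ξ)
              + ∫ ξ in (0:ℝ)..x, κ i x ξ * χ t ξ) →
        (∀ t x : ℝ, 0 ≤ t → 0 ≤ x → x ≤ L →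
          deriv (fun τ => χ τ x) t - μ * deriv (fun y => χ t y) x = 0) →
        -- boundary conditions
        (∀ i, ∀ t : ℝ, 0 ≤ t → ψ i t 0 = δ i * χ t 0) →
        (∀ t : ℝ, 0 ≤ t → χ t L = 0) →
        ∀ t : ℝ, 0 ≤ t →
          (∑ i, ∫ x in (0:ℝ)..L, (ψ i t x) ^ 2) + (∫ x in (0:ℝ)..L, (χ t x) ^ 2)
            ≤ M * Real.exp (-lam * t) *
              ((∑ i, ∫ x in (0:ℝ)..L, (ψ i 0 x) ^ 2)
                + (∫ x in (0:ℝ)..L, (χ 0 x) ^ 2)) := by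
  obtain ⟨K, hKσ, hKc, hKκ⟩ := exists_coeff_bound L σ c κ hcC hκC
  obtain ⟨g, hg, hgγ⟩ : ∃ g > 0, ∀ i, g ≤ γ i := by
    obtain ⟨i, hi⟩ := Finite.exists_min γ
    exact ⟨γ i, hγ i, hi⟩
  -- `C` bounds the coupling, `D` the inflow at `x = 0`; `θ` and `B` are chosen to dominate them
  set C : ℝ := 1 + 27 * K ^ 2 * (1 + L ^ 2) with hC
  have hC0 : 0 < C := by positivity
  set D : ℝ := ∑ i, γ i * δ i ^ 2 with hD
  have hD0 : 0 ≤ D := Finset.sum_nonneg fun i _ => mul_nonneg (hγ i).le (sq_nonneg _)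
  obtain ⟨θ, hθ, hθg⟩ : ∃ θ > 0, θ * g = C + 1 :=
    ⟨(C + 1) / g, by positivity, by field_simp⟩
  obtain ⟨B, hB, hBμ⟩ : ∃ B > 0, B * μ = C + D + 1 :=
    ⟨(C + D + 1) / μ, by positivity, by field_simp⟩
  refine ⟨(Real.exp (θ * L) + 1 / B) * (1 + B * Real.exp L), by positivity, 1 / (1 + B),
    by positivity, ?_⟩
  intro ψ χ hψ hχ hpde hχpde hbc hχL t ht
  set W : Fin 3 → ℝ → ℝ :=
    fun i s => ∫ x in (0:ℝ)..L, Real.exp (-θ * x) * ψ i s x ^ 2 with hW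
  set X : ℝ → ℝ := fun s => ∫ x in (0:ℝ)..L, Real.exp (1 * x) * χ s x ^ 2 with hX
  have cψ : ∀ i s, Continuous (ψ i s) := fun i s =>
    (hψ i).continuous.comp (Continuous.prodMk_right s)
  have cχ : ∀ s, Continuous (χ s) := fun s => hχ.continuous.comp (Continuous.prodMk_right s)
  -- equivalence of the weighted and unweighted energies
  have hWb : ∀ i s, Real.exp (-θ * L) * (∫ x in (0:ℝ)..L, ψ i s x ^ 2) ≤ W i s ∧
      W i s ≤ 1 * ∫ x in (0:ℝ)..L, ψ i s x ^ 2 := fun i s =>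
    energy_bounds hL (by fun_prop) (cψ i s) fun x hx =>
      ⟨Real.exp_le_exp.2 (by nlinarith [hx.2]), Real.exp_le_one_iff.2 (by nlinarith [hx.1])⟩
  have hXb : ∀ s, 1 * (∫ x in (0:ℝ)..L, χ s x ^ 2) ≤ X s ∧
      X s ≤ Real.exp L * ∫ x in (0:ℝ)..L, χ s x ^ 2 := fun s =>
    energy_bounds hL (by fun_prop) (cχ s) fun x hx =>
      ⟨Real.one_le_exp (by linarith [hx.1]), Real.exp_le_exp.2 (by linarith [hx.2])⟩
  have hEψ : ∀ i s, 0 ≤ ∫ x in (0:ℝ)..L, ψ i s x ^ 2 := fun i s =>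
    integral_nonneg hL.le fun _ _ => sq_nonneg _
  have hEχ : ∀ s, 0 ≤ ∫ x in (0:ℝ)..L, χ s x ^ 2 := fun s =>
    integral_nonneg hL.le fun _ _ => sq_nonneg _
  have hW0 : ∀ i s, 0 ≤ W i s := fun i s => integral_nonneg hL.le fun _ _ => by positivity
  have hX0 : ∀ s, 0 ≤ X s := fun s => integral_nonneg hL.le fun _ _ => by positivity
  have hWd := fun i s => hasDerivAt_energy (L := L) (hψ i) (-θ) (γ i) s
  have hXd := fun s => hasDerivAt_energy (L := L) hχ 1 (-μ) s
  have hVd := fun s => (HasDerivAt.fun_sum fun i (_ : i ∈ Finset.univ) => hWd i s).add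
    ((hXd s).const_mul B)
  have hdecay := le_exp_of_hasDerivAt_le (lam := 1 / (1 + B)) hVd ?_ ht
  · change (∑ i, W i t) + B * X t
      ≤ Real.exp (-(1 / (1 + B)) * t) * ((∑ i, W i 0) + B * X 0) at hdecay
    have hlow : (∑ i, ∫ x in (0:ℝ)..L, (ψ i t x) ^ 2) + (∫ x in (0:ℝ)..L, (χ t x) ^ 2)
        ≤ (Real.exp (θ * L) + 1 / B) * ((∑ i, W i t) + B * X t) := by
      have h1 : ∑ i, ∫ x in (0:ℝ)..L, (ψ i t x) ^ 2 ≤ Real.exp (θ * L) * ∑ i, W i t := by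
        rw [Finset.mul_sum]
        refine Finset.sum_le_sum fun i _ => ?_
        have := mul_le_mul_of_nonneg_left (hWb i t).1 (Real.exp_nonneg (θ * L))
        rwa [← mul_assoc, ← Real.exp_add, show θ * L + -θ * L = 0 by ring, Real.exp_zero,
          one_mul] at this
      have h2 : 1 / B * (B * X t) = X t := by field_simp
      have h3 : 0 ≤ 1 / B * ∑ i, W i t :=
        mul_nonneg (by positivity) (Finset.sum_nonneg fun i _ => hW0 i t)
      have h4 : 0 ≤ Real.exp (θ * L) * (B * X t) :=
        mul_nonneg (Real.exp_nonneg _) (mul_nonneg hB.le (hX0 t))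
      linarith [(hXb t).1]
    have hup : (∑ i, W i 0) + B * X 0 ≤ (1 + B * Real.exp L) *
        ((∑ i, ∫ x in (0:ℝ)..L, (ψ i 0 x) ^ 2) + (∫ x in (0:ℝ)..L, (χ 0 x) ^ 2)) := by
      have h1 : ∑ i, W i 0 ≤ ∑ i, ∫ x in (0:ℝ)..L, (ψ i 0 x) ^ 2 :=
        Finset.sum_le_sum fun i _ => by linarith [(hWb i 0).2]
      have h2 := mul_le_mul_of_nonneg_left (hXb 0).2 hB.le
      have h3 : 0 ≤ B * Real.exp L * ∑ i, ∫ x in (0:ℝ)..L, (ψ i 0 x) ^ 2 :=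
        mul_nonneg (by positivity) (Finset.sum_nonneg fun i _ => hEψ i 0)
      linarith [hEχ 0]
    refine (hlow.trans (mul_le_mul_of_nonneg_left (hdecay.trans
      (mul_le_mul_of_nonneg_left hup (Real.exp_nonneg _))) (by positivity))).trans_eq ?_
    ring
  · intro s hs
    have hsrc : ∀ i, (∫ x in (0:ℝ)..L, Real.exp (-θ * x) * (2 * ψ i s x *
        (deriv (fun τ => ψ i τ x) s + γ i * deriv (fun y => ψ i s y) x)))
        ≤ W i s + 9 * K ^ 2 * ((1 + L ^ 2) * (∑ j, W j s)
          + L ^ 2 * ∫ x in (0:ℝ)..L, χ s x ^ 2) := fun i => by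
      have h1 : Continuous (fun x => deriv (fun τ => ψ i τ x) s) :=
        (continuous_deriv_time (hψ i)).comp (Continuous.prodMk_right s)
      have h2 : Continuous (fun x => deriv (fun y => ψ i s y) x) :=
        (continuous_deriv_space (hψ i)).comp (Continuous.prodMk_right s)
      refine work_le hL hθ.le (f := fun j => ψ j s) (fun j => cψ j s) (cχ s)
        (S := fun x => deriv (fun τ => ψ i τ x) s + γ i * deriv (fun y => ψ i s y) x)
        (by fun_prop) i fun x hx => ?_
      simp only [hpde i s x hs hx.1 hx.2]
      exact abs_source_le hx (hKσ i) (hKc i) (hKκ i) (fun j => cψ j s) (cχ s)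
    have hχ0 : ∫ x in (0:ℝ)..L, Real.exp (1 * x) * (2 * χ s x *
        (deriv (fun τ => χ τ x) s + -μ * deriv (fun y => χ s y) x)) = 0 := by
      rw [integral_congr (g := fun _ => 0) fun x hx => ?_]
      · simp
      · rw [uIcc_of_le hL.le] at hx
        have := hχpde s x hs hx.1 hx.2
        simp only [neg_mul, ← sub_eq_add_neg, this, mul_zero]
    have hψ' : ∀ i, γ i * (ψ i s 0 ^ 2 - Real.exp (-θ * L) * ψ i s L ^ 2 + -θ * W i s)
        ≤ γ i * δ i ^ 2 * χ s 0 ^ 2 - (C + 1) * W i s := fun i => by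
      rw [hbc i s hs, ← hθg]
      have h1 : 0 ≤ γ i * (Real.exp (-θ * L) * ψ i s L ^ 2) :=
        mul_nonneg (hγ i).le (by positivity)
      have h2 := mul_le_mul_of_nonneg_right (hgγ i) (mul_nonneg hθ.le (hW0 i s))
      nlinarith
    have hsum := Finset.sum_le_sum fun i (_ : i ∈ Finset.univ) => add_le_add (hψ' i) (hsrc i)
    have hrhs : ∀ q : ℝ, ∑ i, (γ i * δ i ^ 2 * χ s 0 ^ 2 - (C + 1) * W i s + (W i s + q))
        = D * χ s 0 ^ 2 - (C + 1) * (∑ i, W i s) + ((∑ i, W i s) + 3 * q) := fun q => by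
      simp only [hD, Fin.sum_univ_three]
      ring
    rw [hrhs] at hsum
    rw [hχ0, hχL s hs]
    change (∑ i, (γ i * (ψ i s 0 ^ 2 - Real.exp (-θ * L) * ψ i s L ^ 2 + -θ * W i s) + _))
      + B * (-μ * (χ s 0 ^ 2 - Real.exp (1 * L) * 0 ^ 2 + 1 * X s) + 0)
      ≤ -(1 / (1 + B)) * ((∑ i, W i s) + B * X s)
    have hWs : 0 ≤ ∑ i, W i s := Finset.sum_nonneg fun i _ => hW0 i s
    generalize (∑ i, W i s) = w at *
    have hrate : 1 / (1 + B) * (w + B * X s) ≤ w + X s := by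
      rw [div_mul_eq_mul_div, one_mul, div_le_iff₀ (by positivity)]
      nlinarith [mul_nonneg hB.le hWs, hX0 s]
    have hcpl : w + 3 * (9 * K ^ 2 * ((1 + L ^ 2) * w + L ^ 2 * ∫ x in (0:ℝ)..L, χ s x ^ 2))
        ≤ C * (w + X s) := by
      have h1 : L ^ 2 * ∫ x in (0:ℝ)..L, χ s x ^ 2 ≤ (1 + L ^ 2) * X s := by
        nlinarith [(hXb s).1, hX0 s, sq_nonneg L]
      have h2 := mul_le_mul_of_nonneg_left h1 (by positivity : 0 ≤ 27 * K ^ 2)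
      rw [hC]
      linarith [hX0 s]
    have hflux : B * (-μ * (χ s 0 ^ 2 - Real.exp (1 * L) * 0 ^ 2 + 1 * X s) + 0)
        = -(C + D + 1) * (χ s 0 ^ 2 + X s) := by
      rw [← hBμ]; ring
    rw [hflux]
    have h5 := mul_nonneg hD0 (hX0 s)
    have h6 := mul_nonneg hC0.le (sq_nonneg (χ s 0))
    have h7 := sq_nonneg (χ s 0)
    linarith
end

section
/- Let F : T → ℝ and K : T → ℝ be continuous. Then there exists a unique continuous function f : T → ℝ satisfying the Volterra integral equation of the second kind f(x,ξ) = F(x,ξ) + ∫_ξ^x f(x,s) K(s,ξ) ds for all (x,ξ) ∈ T. -/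
/-!
The equation is a fixed-point problem, and it becomes contractive after an exponential change of
unknown. Let `M ≥ 0` bound `|K|` on the triangle `T` and put `f(x,ξ) = g(x,ξ) exp(2M(x - ξ))`. The
equation for `f` turns into

  `g(x,ξ) = F(x,ξ) exp(-2M(x - ξ)) + ∫_ξ^x g(x,s) K(s,ξ) exp(-2M(s - ξ)) ds`.

Since `∫_ξ^x M exp(-2M(s - ξ)) ds ≤ 1/2` (`integral_exp_weight_le`), the right-hand side is a
`1/2`-contraction of `C(T, ℝ)` in the sup norm (`volterraOp_contracting`), and Banach's theorem
provides existence and uniqueness at once.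

To have integrands that are continuous in all variables, functions on `T` are extended to the plane
by composition with a continuous retraction onto `T`; the integrals in the equation only see
points of `T`, where the extension changes nothing.
-/

/-- The closed triangle `{(x, ξ) : 0 ≤ ξ ≤ x ≤ L}`. -/
def triangle (L : ℝ) : Set (ℝ × ℝ) := {p : ℝ × ℝ | 0 ≤ p.2 ∧ p.2 ≤ p.1 ∧ p.1 ≤ L}

instance triangle_compactSpace (L : ℝ) : CompactSpace (triangle L) := by
  rw [← isCompact_iff_compactSpace]
  refine (isCompact_Icc (a := ((0 : ℝ), (0 : ℝ))) (b := (L, L))).of_isClosed_subset ?_ ?_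
  · exact (isClosed_le continuous_const continuous_snd).inter
      ((isClosed_le continuous_snd continuous_fst).inter
        (isClosed_le continuous_fst continuous_const))
  · rintro ⟨x, y⟩ ⟨h1, h2, h3⟩
    simp only at h1 h2 h3
    exact ⟨⟨h1.trans h2, h1⟩, ⟨h3, h2.trans h3⟩⟩

/-- The retraction of the plane onto the triangle that clamps `x` to `[0, L]` and then `ξ` to
`[0, x]`. -/
def retract (L : ℝ) (hL : 0 < L) (p : ℝ × ℝ) : triangle L :=
  ⟨(max 0 (min p.1 L), max 0 (min p.2 (max 0 (min p.1 L)))),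
    le_max_left _ _, max_le (le_max_left _ _) (min_le_right _ _),
    max_le hL.le (min_le_right _ _)⟩

lemma continuous_retract (L : ℝ) (hL : 0 < L) : Continuous (retract L hL) := by
  unfold retract
  fun_prop

lemma retract_of_mem {L : ℝ} (hL : 0 < L) {p : ℝ × ℝ} (hp : p ∈ triangle L) :
    retract L hL p = ⟨p, hp⟩ := by
  obtain ⟨x, y⟩ := p
  obtain ⟨h1, h2, h3⟩ := id hp
  simp only at h1 h2 h3
  apply Subtype.ext
  simp only [retract]
  rw [min_eq_left h3, max_eq_right (h1.trans h2), min_eq_left h2, max_eq_right h1]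

lemma continuous_integral_second_slot {Φ : ℝ × ℝ → ℝ → ℝ}
    (hΦ : Continuous (Function.uncurry Φ)) :
    Continuous fun p : ℝ × ℝ => ∫ s in p.2..p.1, Φ p s := by
  have hi (p : ℝ × ℝ) (a b : ℝ) : IntervalIntegrable (Φ p) MeasureTheory.volume a b :=
    (hΦ.comp (Continuous.prodMk_right p)).intervalIntegrable a b
  -- The available continuity result has a fixed lower endpoint.
  have h : (fun p : ℝ × ℝ => ∫ s in p.2..p.1, Φ p s)
      = fun p => (∫ s in (0 : ℝ)..p.1, Φ p s) - ∫ s in (0 : ℝ)..p.2, Φ p s := by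
    funext p
    exact (intervalIntegral.integral_interval_sub_left (hi p _ _) (hi p _ _)).symm
  rw [h]
  exact (intervalIntegral.continuous_parametric_intervalIntegral_of_continuous hΦ
    continuous_fst).sub
    (intervalIntegral.continuous_parametric_intervalIntegral_of_continuous hΦ continuous_snd)

/-- The total mass of the weighted kernel bound is at most `1/2`; this is the contraction
constant. -/
lemma integral_exp_weight_le (M x ξ : ℝ) :
    ∫ s in ξ..x, M * Real.exp (-(2 * M) * (s - ξ)) ≤ 1 / 2 := by
  have hd : ∀ s ∈ Set.uIcc ξ x, HasDerivAt (fun s => -(1 / 2) * Real.exp (-(2 * M) * (s - ξ)))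
      (M * Real.exp (-(2 * M) * (s - ξ))) s := by
    intro s _
    refine (((((hasDerivAt_id' s).sub_const ξ).const_mul (-(2 * M))).exp).const_mul
      (-(1 / 2 : ℝ))).congr_deriv ?_
    ring
  rw [intervalIntegral.integral_eq_sub_of_hasDerivAt hd
    (Continuous.intervalIntegrable (by fun_prop) _ _)]
  have := Real.exp_pos (-(2 * M) * (x - ξ))
  simp only [sub_self, mul_zero, Real.exp_zero]
  linarith

/-- The right-hand side of the equation for the weighted unknown `g = f exp(-2M(x - ξ))`, as a
self-map of `C(T, ℝ)`; the functions under the integral are extended to the plane by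
`retract`. -/
noncomputable def volterraOp (L : ℝ) (hL : 0 < L) (M : ℝ) (F K g : C(triangle L, ℝ)) :
    C(triangle L, ℝ) where
  toFun p := F p * Real.exp (-(2 * M) * (p.1.1 - p.1.2)) +
    ∫ s in p.1.2..p.1.1, g (retract L hL (p.1.1, s)) *
      (K (retract L hL (s, p.1.2)) * Real.exp (-(2 * M) * (s - p.1.2)))
  continuous_toFun := by
    have hr := continuous_retract L hL
    refine Continuous.add (by fun_prop) ?_
    refine (continuous_integral_second_slot (Φ := fun p s => g (retract L hL (p.1, s)) *
      (K (retract L hL (s, p.2)) * Real.exp (-(2 * M) * (s - p.2)))) ?_).comp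
      continuous_subtype_val
    simp only [Function.uncurry_def]
    fun_prop

lemma volterraOp_contracting {L : ℝ} (hL : 0 < L) {M : ℝ}
    (F K : C(triangle L, ℝ)) (hK : ∀ p, |K p| ≤ M) :
    ContractingWith (1 / 2) (volterraOp L hL M F K) := by
  refine ⟨by norm_num, LipschitzWith.of_dist_le_mul fun g₁ g₂ => ?_⟩
  rw [ContinuousMap.dist_le (by positivity)]
  rintro ⟨⟨x, ξ⟩, hp⟩
  have hξx : ξ ≤ x := hp.2.1
  have hr := continuous_retract L hL
  simp only [volterraOp, ContinuousMap.coe_mk, dist_add_left]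
  rw [Real.dist_eq, ← intervalIntegral.integral_sub
    (Continuous.intervalIntegrable (by fun_prop) _ _)
    (Continuous.intervalIntegrable (by fun_prop) _ _), ← Real.norm_eq_abs]
  calc _ ≤ ∫ s in ξ..x, dist g₁ g₂ * (M * Real.exp (-(2 * M) * (s - ξ))) := by
        refine intervalIntegral.norm_integral_le_of_norm_le hξx
          (Filter.Eventually.of_forall fun s _ => ?_)
          (Continuous.intervalIntegrable (by fun_prop) _ _)
        rw [← sub_mul, norm_mul, norm_mul, Real.norm_eq_abs (Real.exp _), Real.abs_exp]
        gcongr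
        · exact ContinuousMap.dist_apply_le_dist (f := g₁) (g := g₂) _
        · exact hK _
    _ = dist g₁ g₂ * ∫ s in ξ..x, M * Real.exp (-(2 * M) * (s - ξ)) :=
        intervalIntegral.integral_const_mul _ _
    _ ≤ dist g₁ g₂ * (1 / 2) := by
        gcongr
        exact integral_exp_weight_le M x ξ
    _ = _ := by push_cast; ring

/-- Fixed points of `volterraOp` are exactly the weighted solutions: for `g = f exp(-2M(x - ξ))`
on the triangle, the fixed-point equation at `(x, ξ)` is the original equation at `(x, ξ)`. -/
lemma volterraOp_apply_eq_iff {L : ℝ} (hL : 0 < L) (M : ℝ) (F K g : C(triangle L, ℝ))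
    {F' K' f : ℝ → ℝ → ℝ} (hF : ∀ p : triangle L, F p = F' p.1.1 p.1.2)
    (hK : ∀ p : triangle L, K p = K' p.1.1 p.1.2)
    (hg : ∀ p : triangle L, g p = f p.1.1 p.1.2 * Real.exp (-(2 * M) * (p.1.1 - p.1.2)))
    {x ξ : ℝ} (hp : (x, ξ) ∈ triangle L) :
    volterraOp L hL M F K g ⟨(x, ξ), hp⟩ = g ⟨(x, ξ), hp⟩ ↔
      f x ξ = F' x ξ + ∫ s in ξ..x, f x s * K' s ξ := by
  obtain ⟨h0, h1, h2⟩ := id hp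
  simp only at h0 h1 h2
  have hint : ∫ s in ξ..x, g (retract L hL (x, s)) *
      (K (retract L hL (s, ξ)) * Real.exp (-(2 * M) * (s - ξ)))
      = (∫ s in ξ..x, f x s * K' s ξ) * Real.exp (-(2 * M) * (x - ξ)) := by
    rw [← intervalIntegral.integral_mul_const]
    refine intervalIntegral.integral_congr fun s hs => ?_
    rw [Set.uIcc_of_le h1] at hs
    have m1 : (x, s) ∈ triangle L := ⟨h0.trans hs.1, hs.2, h2⟩
    have m2 : (s, ξ) ∈ triangle L := ⟨h0, hs.1, hs.2.trans h2⟩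
    have he : Real.exp (-(2 * M) * (x - ξ))
        = Real.exp (-(2 * M) * (x - s)) * Real.exp (-(2 * M) * (s - ξ)) := by
      rw [← Real.exp_add]
      ring_nf
    simp only [retract_of_mem hL m1, retract_of_mem hL m2, hg, hK, he]
    ring
  simp only [volterraOp, ContinuousMap.coe_mk, hint]
  rw [hg, hF, ← add_mul, mul_left_inj' (Real.exp_ne_zero _), eq_comm]


/- STATEMENT 7: Existence and uniqueness of a continuous solution of the
Volterra integral equation of the second kind
f(x,ξ) = F(x,ξ) + ∫_ξ^x f(x,s) K(s,ξ) ds on the triangle T. -/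

theorem volterra_second_kind_second_slot_existence_uniqueness
    (L : ℝ) (hL : 0 < L)
    (F K : ℝ → ℝ → ℝ)
    (hF : ContinuousOn (Function.uncurry F)
      {p : ℝ × ℝ | 0 ≤ p.2 ∧ p.2 ≤ p.1 ∧ p.1 ≤ L})
    (hK : ContinuousOn (Function.uncurry K)
      {p : ℝ × ℝ | 0 ≤ p.2 ∧ p.2 ≤ p.1 ∧ p.1 ≤ L}) :
    ∃ f : ℝ → ℝ → ℝ,
      (ContinuousOn (Function.uncurry f)
        {p : ℝ × ℝ | 0 ≤ p.2 ∧ p.2 ≤ p.1 ∧ p.1 ≤ L}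
      ∧ ∀ x ξ : ℝ, 0 ≤ ξ → ξ ≤ x → x ≤ L →
          f x ξ = F x ξ + ∫ s in ξ..x, f x s * K s ξ)
      ∧ ∀ f' : ℝ → ℝ → ℝ,
          ContinuousOn (Function.uncurry f')
            {p : ℝ × ℝ | 0 ≤ p.2 ∧ p.2 ≤ p.1 ∧ p.1 ≤ L} →
          (∀ x ξ : ℝ, 0 ≤ ξ → ξ ≤ x → x ≤ L →
            f' x ξ = F x ξ + ∫ s in ξ..x, f' x s * K s ξ) →
          ∀ x ξ : ℝ, 0 ≤ ξ → ξ ≤ x → x ≤ L → f' x ξ = f x ξ := by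
  have hr := continuous_retract L hL
  let F₀ : C(triangle L, ℝ) := ⟨fun p => F p.1.1 p.1.2, continuousOn_iff_continuous_domRestrict.1 hF⟩
  let K₀ : C(triangle L, ℝ) := ⟨fun p => K p.1.1 p.1.2, continuousOn_iff_continuous_domRestrict.1 hK⟩
  set M := ‖K₀‖
  have hc : ContractingWith (1 / 2) (volterraOp L hL M F₀ K₀) :=
    volterraOp_contracting hL F₀ K₀ K₀.norm_coe_le_norm
  obtain ⟨g, hfix, huniq⟩ : ∃ g, volterraOp L hL M F₀ K₀ g = g ∧
      ∀ g', volterraOp L hL M F₀ K₀ g' = g' → g' = g :=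
    ⟨ContractingWith.fixedPoint _ hc, hc.fixedPoint_isFixedPt, fun _ h => hc.fixedPoint_unique h⟩
  have hfg (p : triangle L) : g p = (g (retract L hL (p.1.1, p.1.2)) *
      Real.exp (2 * M * (p.1.1 - p.1.2))) * Real.exp (-(2 * M) * (p.1.1 - p.1.2)) := by
    rw [retract_of_mem hL p.2, mul_assoc, ← Real.exp_add]
    simp
  refine ⟨fun x ξ => g (retract L hL (x, ξ)) * Real.exp (2 * M * (x - ξ)), ⟨?_, ?_⟩, ?_⟩
  · apply Continuous.continuousOn
    simp only [Function.uncurry_def]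
    fun_prop
  · intro x ξ h0 h1 h2
    exact (volterraOp_apply_eq_iff hL M F₀ K₀ g
      (f := fun x ξ => g (retract L hL (x, ξ)) * Real.exp (2 * M * (x - ξ)))
      (fun _ => rfl) (fun _ => rfl) hfg ⟨h0, h1, h2⟩).1 (by rw [hfix])
  · intro f' hf' heq x ξ h0 h1 h2
    have hf₀ : Continuous fun p : triangle L => f' p.1.1 p.1.2 :=
      continuousOn_iff_continuous_domRestrict.1 hf'
    let g' : C(triangle L, ℝ) :=
      ⟨fun p => f' p.1.1 p.1.2 * Real.exp (-(2 * M) * (p.1.1 - p.1.2)),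
        hf₀.mul (by fun_prop)⟩
    have hg' : g' = g := by
      refine huniq g' (ContinuousMap.ext ?_)
      rintro ⟨⟨y, η⟩, hp⟩
      exact (volterraOp_apply_eq_iff hL M F₀ K₀ g' (fun _ => rfl) (fun _ => rfl)
        (fun _ => rfl) hp).2 (heq y η hp.1 hp.2.1 hp.2.2)
    have h := hfg ⟨(x, ξ), h0, h1, h2⟩
    rw [← hg'] at h ⊢
    exact mul_right_cancel₀ (Real.exp_ne_zero _) h
end

section
/- Let F : T → ℝ and K : T → ℝ be continuous. Then there exists a unique continuous function f : T → ℝ satisfying the Volterra integral equation of the second kind f(x,ξ) = F(x,ξ) + ∫_ξ^x f(s,ξ) K(x,s) ds for all (x,ξ) ∈ T. -/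
/-!
The solution is the Neumann series `f = ∑ uₙ`, where `u₀ = F` and
`uₙ₊₁(x,ξ) = ∫_ξ^x uₙ(s,ξ) K(x,s) ds`. If `|K| ≤ M` and `|F| ≤ C` on the triangle, induction gives
`|uₙ(x,ξ)| ≤ C (M (x - ξ))ⁿ / n!` (`volterra_bound_step`), so the series converges uniformly on the
triangle; its sum is continuous and may be integrated termwise. The difference `d` of two
solutions satisfies `d(x,ξ) = ∫_ξ^x d(s,ξ) K(x,s) ds`, so the same estimate applies to `d` for
every `n` and forces `d = 0`.

To obtain continuity of the iterates, `F` and `K` are first extended continuously to the whole plane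
by composing with a retraction onto the triangle (`volterra_extend`).
-/

/-- The closed triangle `0 ≤ ξ ≤ x ≤ L`, as a set of pairs `(x, ξ)`. -/
def volterraTri (L : ℝ) : Set (ℝ × ℝ) := {p : ℝ × ℝ | 0 ≤ p.2 ∧ p.2 ≤ p.1 ∧ p.1 ≤ L}

lemma isCompact_volterraTri (L : ℝ) : IsCompact (volterraTri L) := by
  refine (isCompact_Icc (a := ((0 : ℝ), (0 : ℝ))) (b := (L, L))).of_isClosed_subset ?_ ?_
  · exact (isClosed_le continuous_const continuous_snd).inter
      ((isClosed_le continuous_snd continuous_fst).inter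
        (isClosed_le continuous_fst continuous_const))
  · rintro ⟨x, ξ⟩ ⟨h1, h2, h3⟩
    simp only at h1 h2 h3
    exact ⟨⟨by simp; linarith, h1⟩, ⟨h3, by simp; linarith⟩⟩

/-- A continuous function on the triangle extends continuously to the plane, through the retraction
`(x, ξ) ↦ (y, max 0 (min ξ y))` with `y = max 0 (min x L)`. -/
lemma volterra_extend {L : ℝ} (hL : 0 < L) {G : ℝ → ℝ → ℝ}
    (hG : ContinuousOn (Function.uncurry G) (volterraTri L)) :
    ∃ G' : ℝ → ℝ → ℝ, Continuous (Function.uncurry G') ∧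
      ∀ x ξ : ℝ, 0 ≤ ξ → ξ ≤ x → x ≤ L → G' x ξ = G x ξ := by
  refine ⟨fun x ξ => G (max 0 (min x L)) (max 0 (min ξ (max 0 (min x L)))), ?_, ?_⟩
  · have : Continuous (fun p : ℝ × ℝ =>
        ((max 0 (min p.1 L), max 0 (min p.2 (max 0 (min p.1 L)))) : ℝ × ℝ)) := by fun_prop
    refine hG.comp_continuous this fun p => ⟨le_max_left _ _, ?_, ?_⟩
    · exact max_le (le_max_left _ _) (min_le_right _ _)
    · exact max_le hL.le (min_le_right _ _)
  · intro x ξ h0 h1 h2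
    simp only [min_eq_left h2, max_eq_right (h0.trans h1), min_eq_left h1, max_eq_right h0]

/-- The Picard bound gains one power of `x - ξ` under the Volterra operator. Only pointwise bounds
are used: where the integrand is not integrable, its integral is `0` and the estimate is trivial. -/
lemma volterra_bound_step {L M C : ℝ} {K u : ℝ → ℝ → ℝ} {n : ℕ} (hC : 0 ≤ C) (hM : 0 ≤ M)
    (hK : ∀ x ξ : ℝ, 0 ≤ ξ → ξ ≤ x → x ≤ L → |K x ξ| ≤ M)
    (hu : ∀ x ξ : ℝ, 0 ≤ ξ → ξ ≤ x → x ≤ L → |u x ξ| ≤ C * (M * (x - ξ)) ^ n / n.factorial)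
    {x ξ : ℝ} (h0 : 0 ≤ ξ) (h1 : ξ ≤ x) (h2 : x ≤ L) :
    |∫ s in ξ..x, u s ξ * K x s| ≤ C * (M * (x - ξ)) ^ (n + 1) / (n + 1).factorial := by
  have hle : ‖∫ s in ξ..x, u s ξ * K x s‖ ≤
      ∫ s in ξ..x, (C * M ^ (n + 1) / n.factorial) * (s - ξ) ^ n := by
    refine intervalIntegral.norm_integral_le_of_norm_le h1 (.of_forall fun s hs => ?_)
      (Continuous.intervalIntegrable (by fun_prop) _ _)
    rw [norm_mul, Real.norm_eq_abs, Real.norm_eq_abs]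
    have a := hu s ξ h0 hs.1.le (hs.2.trans h2)
    have b := hK x s (h0.trans hs.1.le) hs.2 h2
    have c : 0 ≤ s - ξ := sub_nonneg.2 hs.1.le
    calc |u s ξ| * |K x s| ≤ C * (M * (s - ξ)) ^ n / n.factorial * M := by gcongr
      _ = _ := by rw [mul_pow]; ring
  rw [Real.norm_eq_abs] at hle
  refine hle.trans (le_of_eq ?_)
  rw [intervalIntegral.integral_const_mul,
    intervalIntegral.integral_comp_sub_right (fun t => t ^ n) ξ, integral_pow,
    Nat.factorial_succ]
  push_cast
  have : (n.factorial : ℝ) ≠ 0 := by positivity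
  rw [sub_self, zero_pow (Nat.succ_ne_zero n), mul_pow]
  field_simp
  ring

/-- The terms of the Neumann series. -/
noncomputable def volterraIter (F K : ℝ → ℝ → ℝ) : ℕ → ℝ → ℝ → ℝ
  | 0 => F
  | n + 1 => fun x ξ => ∫ s in ξ..x, volterraIter F K n s ξ * K x s

lemma continuous_volterraIter {F K : ℝ → ℝ → ℝ} (hF : Continuous (Function.uncurry F))
    (hK : Continuous (Function.uncurry K)) (n : ℕ) :
    Continuous (Function.uncurry (volterraIter F K n)) := by
  induction n with
  | zero => exact hF
  | succ n ih =>
    -- The parametric integral lemma wants a fixed lower endpoint, hence the splitting at `0`.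
    have hc : Continuous (Function.uncurry
        fun (p : ℝ × ℝ) (s : ℝ) => volterraIter F K n s p.2 * K p.1 s) := by
      have a : Continuous (fun q : (ℝ × ℝ) × ℝ => volterraIter F K n q.2 q.1.2) :=
        ih.comp (f := fun q : (ℝ × ℝ) × ℝ => (q.2, q.1.2)) (by fun_prop)
      have b : Continuous (fun q : (ℝ × ℝ) × ℝ => K q.1.1 q.2) :=
        hK.comp (f := fun q : (ℝ × ℝ) × ℝ => (q.1.1, q.2)) (by fun_prop)
      exact a.mul b
    have hi : ∀ (p : ℝ × ℝ) (a b : ℝ), IntervalIntegrable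
        (fun s => volterraIter F K n s p.2 * K p.1 s) MeasureTheory.volume a b := fun p a b =>
      (hc.comp (f := fun s : ℝ => (p, s)) (by fun_prop)).intervalIntegrable a b
    have key := (intervalIntegral.continuous_parametric_intervalIntegral_of_continuous
      (μ := MeasureTheory.volume) (a₀ := 0) hc continuous_fst).sub
      (intervalIntegral.continuous_parametric_intervalIntegral_of_continuous
      (μ := MeasureTheory.volume) (a₀ := 0) hc continuous_snd)
    refine key.congr fun p => ?_
    exact intervalIntegral.integral_interval_sub_left (hi p _ _) (hi p _ _)

lemma volterraIter_bound {L M C : ℝ} {F K : ℝ → ℝ → ℝ} (hC : 0 ≤ C) (hM : 0 ≤ M)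
    (hK : ∀ x ξ : ℝ, 0 ≤ ξ → ξ ≤ x → x ≤ L → |K x ξ| ≤ M)
    (hF : ∀ x ξ : ℝ, 0 ≤ ξ → ξ ≤ x → x ≤ L → |F x ξ| ≤ C) (n : ℕ) :
    ∀ x ξ : ℝ, 0 ≤ ξ → ξ ≤ x → x ≤ L →
      |volterraIter F K n x ξ| ≤ C * (M * (x - ξ)) ^ n / n.factorial := by
  induction n with
  | zero => simpa [volterraIter] using hF
  | succ n ih => exact fun x ξ h0 h1 h2 => volterra_bound_step hC hM hK ih h0 h1 h2

lemma volterra_exists_bound {L : ℝ} {G : ℝ → ℝ → ℝ}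
    (hG : ContinuousOn (Function.uncurry G) (volterraTri L)) :
    ∃ C : ℝ, 0 ≤ C ∧ ∀ x ξ : ℝ, 0 ≤ ξ → ξ ≤ x → x ≤ L → |G x ξ| ≤ C := by
  obtain ⟨C, hC⟩ := (isCompact_volterraTri L).exists_bound_of_continuousOn hG
  exact ⟨max C 0, le_max_right _ _, fun x ξ h0 h1 h2 =>
    (hC (x, ξ) ⟨h0, h1, h2⟩).trans (le_max_left _ _)⟩

lemma volterra_exists {L : ℝ} {F K : ℝ → ℝ → ℝ} (hF : Continuous (Function.uncurry F))
    (hK : Continuous (Function.uncurry K)) :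
    ∃ f : ℝ → ℝ → ℝ, ContinuousOn (Function.uncurry f) (volterraTri L) ∧
      ∀ x ξ : ℝ, 0 ≤ ξ → ξ ≤ x → x ≤ L →
        f x ξ = F x ξ + ∫ s in ξ..x, f s ξ * K x s := by
  obtain ⟨C, hC, hFC⟩ := volterra_exists_bound (L := L) hF.continuousOn
  obtain ⟨M, hM, hKM⟩ := volterra_exists_bound (L := L) hK.continuousOn
  have hu := continuous_volterraIter hF hK
  have hsum : Summable fun n : ℕ => C * ((M * L) ^ n / n.factorial) :=
    (Real.summable_pow_div_factorial (M * L)).mul_left C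
  have hbd : ∀ (n : ℕ) (x ξ : ℝ), 0 ≤ ξ → ξ ≤ x → x ≤ L →
      ‖volterraIter F K n x ξ‖ ≤ C * ((M * L) ^ n / n.factorial) := by
    intro n x ξ h0 h1 h2
    refine (volterraIter_bound hC hM hKM hFC n x ξ h0 h1 h2).trans ?_
    have : 0 ≤ x - ξ := sub_nonneg.2 h1
    rw [mul_div_assoc]
    gcongr
    linarith
  refine ⟨fun x ξ => ∑' n, volterraIter F K n x ξ, ?_, ?_⟩
  · exact continuousOn_tsum (fun n => (hu n).continuousOn) hsum
      fun n p hp => hbd n p.1 p.2 hp.1 hp.2.1 hp.2.2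
  · intro x ξ h0 h1 h2
    have hs : ∀ s, ξ ≤ s → s ≤ x → Summable fun n => volterraIter F K n s ξ :=
      fun s a b => .of_norm_bounded hsum fun n => hbd n s ξ h0 a (b.trans h2)
    have hint : HasSum (fun n => ∫ s in ξ..x, volterraIter F K n s ξ * K x s)
        (∫ s in ξ..x, (∑' n, volterraIter F K n s ξ) * K x s) := by
      refine intervalIntegral.hasSum_integral_of_dominated_convergence
        (fun n _ => C * ((M * L) ^ n / n.factorial) * M) (fun n => ?_) (fun n => ?_) ?_ ?_ ?_
      · have a : Continuous fun s => volterraIter F K n s ξ :=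
          (hu n).comp (f := fun s : ℝ => (s, ξ)) (by fun_prop)
        have b : Continuous fun s => K x s :=
          hK.comp (f := fun s : ℝ => (x, s)) (by fun_prop)
        exact (a.mul b).aestronglyMeasurable
      · refine .of_forall fun s hs => ?_
        rw [Set.uIoc_of_le h1] at hs
        rw [norm_mul]
        exact mul_le_mul (hbd n s ξ h0 hs.1.le (hs.2.trans h2))
          (hKM x s (h0.trans hs.1.le) hs.2 h2) (norm_nonneg _)
          ((norm_nonneg _).trans (hbd n s ξ h0 hs.1.le (hs.2.trans h2)))
      · exact .of_forall fun s _ => hsum.mul_right M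
      · exact intervalIntegrable_const
      · refine .of_forall fun s hs' => ?_
        rw [Set.uIoc_of_le h1] at hs'
        exact (hs s hs'.1.le hs'.2).hasSum.mul_right _
    rw [← hint.tsum_eq]
    exact (hs x h1 le_rfl).tsum_eq_zero_add

/-- A bounded solution of the homogeneous equation vanishes on the triangle. -/
lemma volterra_homogeneous {L M C : ℝ} {K d : ℝ → ℝ → ℝ} (hC : 0 ≤ C) (hM : 0 ≤ M)
    (hK : ∀ x ξ : ℝ, 0 ≤ ξ → ξ ≤ x → x ≤ L → |K x ξ| ≤ M)
    (hd : ∀ x ξ : ℝ, 0 ≤ ξ → ξ ≤ x → x ≤ L → |d x ξ| ≤ C)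
    (heq : ∀ x ξ : ℝ, 0 ≤ ξ → ξ ≤ x → x ≤ L → d x ξ = ∫ s in ξ..x, d s ξ * K x s)
    {x ξ : ℝ} (h0 : 0 ≤ ξ) (h1 : ξ ≤ x) (h2 : x ≤ L) : d x ξ = 0 := by
  have hb : ∀ n : ℕ, ∀ x ξ : ℝ, 0 ≤ ξ → ξ ≤ x → x ≤ L →
      |d x ξ| ≤ C * (M * (x - ξ)) ^ n / n.factorial := by
    intro n
    induction n with
    | zero => simpa using hd
    | succ n ih =>
      intro x ξ h0 h1 h2
      rw [heq x ξ h0 h1 h2]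
      exact volterra_bound_step hC hM hK ih h0 h1 h2
  have ht : Filter.Tendsto (fun n : ℕ => C * (M * (x - ξ)) ^ n / n.factorial)
      Filter.atTop (nhds 0) := by
    simpa [mul_div_assoc] using
      (FloorSemiring.tendsto_pow_div_factorial_atTop (M * (x - ξ))).const_mul C
  exact abs_nonpos_iff.1 (ge_of_tendsto' ht fun n => hb n x ξ h0 h1 h2)

/- STATEMENT 8: Existence and uniqueness of a continuous solution of the
Volterra integral equation of the second kind
f(x,ξ) = F(x,ξ) + ∫_ξ^x f(s,ξ) K(x,s) ds on the triangle T. -/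

theorem volterra_second_kind_first_slot_existence_uniqueness
    (L : ℝ) (hL : 0 < L)
    (F K : ℝ → ℝ → ℝ)
    (hF : ContinuousOn (Function.uncurry F)
      {p : ℝ × ℝ | 0 ≤ p.2 ∧ p.2 ≤ p.1 ∧ p.1 ≤ L})
    (hK : ContinuousOn (Function.uncurry K)
      {p : ℝ × ℝ | 0 ≤ p.2 ∧ p.2 ≤ p.1 ∧ p.1 ≤ L}) :
    ∃ f : ℝ → ℝ → ℝ,
      (ContinuousOn (Function.uncurry f)
        {p : ℝ × ℝ | 0 ≤ p.2 ∧ p.2 ≤ p.1 ∧ p.1 ≤ L}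
      ∧ ∀ x ξ : ℝ, 0 ≤ ξ → ξ ≤ x → x ≤ L →
          f x ξ = F x ξ + ∫ s in ξ..x, f s ξ * K x s)
      ∧ ∀ f' : ℝ → ℝ → ℝ,
          ContinuousOn (Function.uncurry f')
            {p : ℝ × ℝ | 0 ≤ p.2 ∧ p.2 ≤ p.1 ∧ p.1 ≤ L} →
          (∀ x ξ : ℝ, 0 ≤ ξ → ξ ≤ x → x ≤ L →
            f' x ξ = F x ξ + ∫ s in ξ..x, f' s ξ * K x s) →
          ∀ x ξ : ℝ, 0 ≤ ξ → ξ ≤ x → x ≤ L → f' x ξ = f x ξ := by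
  obtain ⟨F', hF'c, hF'⟩ := volterra_extend hL hF
  obtain ⟨K', hK'c, hK'⟩ := volterra_extend hL hK
  obtain ⟨f, hfc, hf⟩ := volterra_exists (L := L) hF'c hK'c
  have hfe : ∀ x ξ : ℝ, 0 ≤ ξ → ξ ≤ x → x ≤ L →
      f x ξ = F x ξ + ∫ s in ξ..x, f s ξ * K x s := by
    intro x ξ h0 h1 h2
    rw [hf x ξ h0 h1 h2, hF' x ξ h0 h1 h2]
    congr 1
    refine intervalIntegral.integral_congr fun s hs => ?_
    rw [Set.uIcc_of_le h1] at hs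
    simp only [hK' x s (h0.trans hs.1) hs.2 h2]
  refine ⟨f, ⟨hfc, hfe⟩, ?_⟩
  intro g hgc hge x ξ h0 h1 h2
  obtain ⟨M, hM, hKM⟩ := volterra_exists_bound (L := L) hK
  obtain ⟨C, hC, hdC⟩ := volterra_exists_bound (L := L) (G := fun x ξ => g x ξ - f x ξ)
    (ContinuousOn.sub hgc hfc)
  -- Integrability is needed to split the integral of the difference.
  have hint : ∀ u : ℝ → ℝ → ℝ, ContinuousOn (Function.uncurry u) (volterraTri L) →
      ∀ x ξ : ℝ, 0 ≤ ξ → ξ ≤ x → x ≤ L →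
      IntervalIntegrable (fun s => u s ξ * K x s) MeasureTheory.volume ξ x := by
    intro u hu x ξ h0 h1 h2
    apply ContinuousOn.intervalIntegrable
    rw [Set.uIcc_of_le h1]
    refine ContinuousOn.mul ?_ ?_
    · exact hu.comp (f := fun s : ℝ => (s, ξ)) (by fun_prop)
        fun s hs => ⟨h0, hs.1, hs.2.trans h2⟩
    · exact ContinuousOn.comp (f := fun s : ℝ => (x, s)) hK (by fun_prop)
        fun s hs => ⟨h0.trans hs.1, hs.2, h2⟩
  refine sub_eq_zero.1 (volterra_homogeneous (d := fun x ξ => g x ξ - f x ξ)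
    hC hM hKM hdC ?_ h0 h1 h2)
  intro x ξ h0 h1 h2
  simp only [sub_mul]
  rw [intervalIntegral.integral_sub (hint g hgc x ξ h0 h1 h2) (hint f hfc x ξ h0 h1 h2),
    hge x ξ h0 h1 h2, hfe x ξ h0 h1 h2]
  ring
end

section
/- Let g > 0, H > 0, V > 0 with V² ≠ gH, and for a > 0 define the cubic polynomial q_a(λ) = gHλ − λ(V − λ)² + agV²(λ − V). Then there exists a₀ > 0 such that for every a ∈ (0, a₀), the polynomial q_a has exactly three real roots, which are distinct, and writing them as μ₁ < μ₂ < μ₃ they satisfy μ₁ < 0 < μ₂ < V < μ₃. (In the subcritical case V < √(gH) the three roots converge, as a → 0⁺, to V − √(gH) < 0, 0 and V + √(gH) respectively; in the supercritical case V > √(gH) they converge to 0, V − √(gH) > 0 and V + √(gH) respectively.) -/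
/-!
Write `q a lam` for the cubic. For every `a > 0` it is negative at `0` (value `-a g V³`), positive
at `V` (value `g H V`), positive far to the left and negative far to the right. Hence it has a root
in each of `(-∞, 0)`, `(0, V)`, `(V, ∞)` by the intermediate value theorem, so `a₀ = 1` works, and
it factors as `-(lam - μ₁) (lam - μ₂) (lam - μ₃)` with `μ₁ + μ₂ + μ₃ = 2 V`.

For the limits, the sign of `q a x` tells on which side of a root the point `x` lies, and for fixed
`x` the sign of `q 0 x = x (gH - (V - x)²)` persists for small `a`. This squeezes the two roots
tending to `V ± √(gH)`; the remaining one tends to `0` because the sum of the roots is `2 V`.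
-/

open Filter Topology

/-- The characteristic cubic as a function of the parameter `a` and the speed `lam`. -/
def sveCubic (g H V a lam : ℝ) : ℝ :=
  g * H * lam - lam * (V - lam) ^ 2 + a * g * V ^ 2 * (lam - V)

lemma sveCubic_continuous (g H V a : ℝ) : Continuous (sveCubic g H V a) := by
  unfold sveCubic; fun_prop

/-- Three distinct roots determine the cubic, whose leading coefficient is `-1`; the first conjunct
is Vieta's formula for the sum of the roots. -/
lemma sveCubic_factor {g H V a m₁ m₂ m₃ : ℝ} (h12 : m₁ < m₂) (h23 : m₂ < m₃)
    (h1 : sveCubic g H V a m₁ = 0) (h2 : sveCubic g H V a m₂ = 0)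
    (h3 : sveCubic g H V a m₃ = 0) :
    m₁ + m₂ + m₃ = 2 * V ∧
      ∀ x, sveCubic g H V a x = -((x - m₁) * (x - m₂) * (x - m₃)) := by
  unfold sveCubic at *
  -- divided differences of the cubic at the roots
  have e12 : g * H - V ^ 2 + a * g * V ^ 2 + 2 * V * (m₁ + m₂)
      - (m₁ ^ 2 + m₁ * m₂ + m₂ ^ 2) = 0 := by
    apply mul_left_cancel₀ (sub_ne_zero.2 h12.ne)
    linear_combination h1 - h2
  have e13 : g * H - V ^ 2 + a * g * V ^ 2 + 2 * V * (m₁ + m₃)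
      - (m₁ ^ 2 + m₁ * m₃ + m₃ ^ 2) = 0 := by
    apply mul_left_cancel₀ (sub_ne_zero.2 (h12.trans h23).ne)
    linear_combination h1 - h3
  have hs : 2 * V - (m₁ + m₂ + m₃) = 0 := by
    apply mul_left_cancel₀ (sub_ne_zero.2 h23.ne)
    linear_combination e12 - e13
  refine ⟨by linarith, fun x => ?_⟩
  -- Newton's interpolation form at the nodes `m₁`, `m₂`
  linear_combination h1 + (x - m₁) * e12 + (x - m₁) * (x - m₂) * hs

lemma sveCubic_roots {g H V a : ℝ} (hg : 0 < g) (hH : 0 < H) (hV : 0 < V) (ha : 0 < a) :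
    ∃ m₁ m₂ m₃ : ℝ, m₁ < 0 ∧ 0 < m₂ ∧ m₂ < V ∧ V < m₃ ∧ m₁ + m₂ + m₃ = 2 * V ∧
      ∀ x, sveCubic g H V a x = -((x - m₁) * (x - m₂) * (x - m₃)) := by
  have hgH : 0 < g * H := by positivity
  have hb : 0 < a * g * V ^ 2 := by positivity
  -- for `t² > gH + a g V²` the cubic is positive at `-t` and negative at `V + t`
  obtain ⟨t, ht0, ht⟩ : ∃ t : ℝ, 0 < t ∧ g * H + a * g * V ^ 2 < t ^ 2 :=
    ⟨1 + g * H + a * g * V ^ 2, by positivity, by nlinarith⟩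
  have q0 : sveCubic g H V a 0 < 0 := by
    have : 0 < a * g * V ^ 2 * V := by positivity
    unfold sveCubic; linarith
  have qV : 0 < sveCubic g H V a V := by
    have : 0 < g * H * V := by positivity
    unfold sveCubic; linarith
  have ql : 0 < sveCubic g H V a (-t) := by
    have h1 := mul_pos (add_pos hV ht0) (sub_pos.2 ht)
    have h2 : 0 < g * H * V := by positivity
    have h3 : 0 < (V + t) * (t * V) := by positivity
    unfold sveCubic; linarith
  have qr : sveCubic g H V a (V + t) < 0 := by
    have h1 := mul_pos (add_pos hV ht0) (sub_pos.2 ht)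
    have h2 : 0 < a * g * V ^ 2 * V := by positivity
    unfold sveCubic; linarith
  have hc := sveCubic_continuous g H V a
  obtain ⟨m₁, ⟨-, b1⟩, r1⟩ :=
    intermediate_value_Ioo' (by linarith : -t ≤ 0) hc.continuousOn ⟨q0, ql⟩
  obtain ⟨m₂, ⟨a2, b2⟩, r2⟩ := intermediate_value_Ioo hV.le hc.continuousOn ⟨q0, qV⟩
  obtain ⟨m₃, ⟨a3, -⟩, r3⟩ :=
    intermediate_value_Ioo' (by linarith : V ≤ V + t) hc.continuousOn ⟨qr, qV⟩
  obtain ⟨hs, hf⟩ := sveCubic_factor (b1.trans a2) (b2.trans a3) r1 r2 r3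
  exact ⟨m₁, m₂, m₃, b1, a2, b2, a3, hs, hf⟩

lemma sveCubic_tendsto (g H V x : ℝ) :
    Tendsto (fun a => sveCubic g H V a x) (𝓝[>] 0) (𝓝 (x * (g * H - (V - x) ^ 2))) := by
  have hc : Continuous (fun a => sveCubic g H V a x) := by unfold sveCubic; fun_prop
  have h := (hc.tendsto 0).mono_left (nhdsWithin_le_nhds (s := Set.Ioi 0))
  convert h using 2
  unfold sveCubic; ring

theorem sve_characteristic_speeds_small_a
    (g H V : ℝ) (hg : 0 < g) (hH : 0 < H) (hV : 0 < V)
    (hnc : V ^ 2 ≠ g * H) :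
    ∃ a₀ > (0:ℝ), ∃ μ₁ μ₂ μ₃ : ℝ → ℝ,
      (∀ a : ℝ, 0 < a → a < a₀ →
        (μ₁ a < μ₂ a ∧ μ₂ a < μ₃ a
          ∧ μ₁ a < 0 ∧ 0 < μ₂ a ∧ μ₂ a < V ∧ V < μ₃ a
          ∧ ∀ lam : ℝ,
              g * H * lam - lam * (V - lam) ^ 2 + a * g * V ^ 2 * (lam - V) = 0
                ↔ (lam = μ₁ a ∨ lam = μ₂ a ∨ lam = μ₃ a)))
      ∧ (V < Real.sqrt (g * H) →
          Tendsto μ₁ (𝓝[>] 0) (𝓝 (V - Real.sqrt (g * H)))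
          ∧ Tendsto μ₂ (𝓝[>] 0) (𝓝 0)
          ∧ Tendsto μ₃ (𝓝[>] 0) (𝓝 (V + Real.sqrt (g * H))))
      ∧ (Real.sqrt (g * H) < V →
          Tendsto μ₁ (𝓝[>] 0) (𝓝 0)
          ∧ Tendsto μ₂ (𝓝[>] 0) (𝓝 (V - Real.sqrt (g * H)))
          ∧ Tendsto μ₃ (𝓝[>] 0) (𝓝 (V + Real.sqrt (g * H)))) := by
  have hex : ∀ a : ℝ, ∃ m₁ m₂ m₃ : ℝ, 0 < a →
      m₁ < 0 ∧ 0 < m₂ ∧ m₂ < V ∧ V < m₃ ∧ m₁ + m₂ + m₃ = 2 * V ∧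
      ∀ x, sveCubic g H V a x = -((x - m₁) * (x - m₂) * (x - m₃)) := by
    intro a
    by_cases ha : 0 < a
    · obtain ⟨m₁, m₂, m₃, h⟩ := sveCubic_roots hg hH hV ha
      exact ⟨m₁, m₂, m₃, fun _ => h⟩
    · exact ⟨0, 0, 0, fun h => absurd h ha⟩
  choose μ₁ μ₂ μ₃ hμ using hex
  have hpos : ∀ᶠ a : ℝ in 𝓝[>] 0, 0 < a := eventually_mem_nhdsWithin
  have hss : Real.sqrt (g * H) ^ 2 = g * H := Real.sq_sqrt (by positivity)
  have hs0 : 0 < Real.sqrt (g * H) := Real.sqrt_pos.2 (by positivity)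
  set s := Real.sqrt (g * H) with hs
  have evpos : ∀ x, 0 < x * (g * H - (V - x) ^ 2) →
      ∀ᶠ a in 𝓝[>] 0, 0 < sveCubic g H V a x :=
    fun x hx => (sveCubic_tendsto g H V x).eventually_const_lt hx
  have evneg : ∀ x, x * (g * H - (V - x) ^ 2) < 0 →
      ∀ᶠ a in 𝓝[>] 0, sveCubic g H V a x < 0 :=
    fun x hx => (sveCubic_tendsto g H V x).eventually_lt_const hx
  have hq : ∀ x, g * H - (V - x) ^ 2 = (x - (V - s)) * ((V + s) - x) := by
    intro x; linear_combination -hss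
  have t3 : Tendsto μ₃ (𝓝[>] 0) (𝓝 (V + s)) := by
    refine tendsto_order.2 ⟨fun x hx => ?_, fun x hx => ?_⟩
    · rcases le_or_gt x V with hxV | hxV
      · filter_upwards [hpos] with a ha
        exact hxV.trans_lt (hμ a ha).2.2.2.1
      · have h0 : 0 < x * (g * H - (V - x) ^ 2) := by
          rw [hq]
          exact mul_pos (by linarith) (mul_pos (by linarith) (by linarith))
        filter_upwards [hpos, evpos x h0] with a ha hqa
        obtain ⟨b1, a2, b2, a3, -, hf⟩ := hμ a ha
        rw [hf] at hqa
        by_contra! h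
        have := mul_nonneg (mul_pos (by linarith : 0 < x - μ₁ a)
          (by linarith : 0 < x - μ₂ a)).le (sub_nonneg.2 h)
        linarith
    · have h0 : x * (g * H - (V - x) ^ 2) < 0 := by
        rw [hq]
        exact mul_neg_of_pos_of_neg (by linarith)
          (mul_neg_of_pos_of_neg (by linarith) (by linarith))
      filter_upwards [hpos, evneg x h0] with a ha hqa
      obtain ⟨b1, a2, b2, a3, -, hf⟩ := hμ a ha
      rw [hf] at hqa
      by_contra! h
      have := mul_nonpos_of_nonneg_of_nonpos (mul_pos (by linarith : 0 < x - μ₁ a)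
          (by linarith : 0 < x - μ₂ a)).le (sub_nonpos.2 h)
      linarith
  refine ⟨1, one_pos, μ₁, μ₂, μ₃, fun a ha _ => ?_, fun hlt => ?_, fun hlt => ?_⟩
  · obtain ⟨b1, a2, b2, a3, -, hf⟩ := hμ a ha
    refine ⟨b1.trans a2, b2.trans a3, b1, a2, b2, a3, fun x => ?_⟩
    have := hf x
    unfold sveCubic at this
    rw [this, neg_eq_zero, mul_eq_zero, mul_eq_zero, sub_eq_zero, sub_eq_zero, sub_eq_zero,
      or_assoc]
  · have t1 : Tendsto μ₁ (𝓝[>] 0) (𝓝 (V - s)) := by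
      refine tendsto_order.2 ⟨fun x hx => ?_, fun x hx => ?_⟩
      · have h0 : 0 < x * (g * H - (V - x) ^ 2) := by
          rw [hq]
          exact mul_pos_of_neg_of_neg (by linarith)
            (mul_neg_of_neg_of_pos (by linarith) (by linarith))
        filter_upwards [hpos, evpos x h0] with a ha hqa
        obtain ⟨b1, a2, b2, a3, -, hf⟩ := hμ a ha
        rw [hf] at hqa
        by_contra! h
        have := mul_nonneg (sub_nonneg.2 h) (mul_pos_of_neg_of_neg
          (by linarith : x - μ₂ a < 0) (by linarith : x - μ₃ a < 0)).le
        linarith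
      · rcases le_or_gt 0 x with hx0 | hx0
        · filter_upwards [hpos] with a ha
          exact (hμ a ha).1.trans_le hx0
        · have h0 : x * (g * H - (V - x) ^ 2) < 0 := by
            rw [hq]
            exact mul_neg_of_neg_of_pos hx0 (mul_pos (by linarith) (by linarith))
          filter_upwards [hpos, evneg x h0] with a ha hqa
          obtain ⟨b1, a2, b2, a3, -, hf⟩ := hμ a ha
          rw [hf] at hqa
          by_contra! h
          have := mul_nonneg_of_nonpos_of_nonpos (sub_nonpos.2 h)
            (neg_nonpos.2 (mul_pos_of_neg_of_neg
              (by linarith : x - μ₂ a < 0) (by linarith : x - μ₃ a < 0)).le)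
          linarith
    refine ⟨t1, ?_, t3⟩
    have h := (t1.add t3).const_sub (2 * V)
    rw [show 2 * V - (V - s + (V + s)) = 0 by ring] at h
    refine h.congr' ?_
    filter_upwards [hpos] with a ha
    linarith [(hμ a ha).2.2.2.2.1]
  · have t2 : Tendsto μ₂ (𝓝[>] 0) (𝓝 (V - s)) := by
      refine tendsto_order.2 ⟨fun x hx => ?_, fun x hx => ?_⟩
      · rcases le_or_gt x 0 with hx0 | hx0
        · filter_upwards [hpos] with a ha
          exact hx0.trans_lt (hμ a ha).2.1
        · have h0 : x * (g * H - (V - x) ^ 2) < 0 := by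
            rw [hq]
            exact mul_neg_of_pos_of_neg hx0 (mul_neg_of_neg_of_pos (by linarith) (by linarith))
          filter_upwards [hpos, evneg x h0] with a ha hqa
          obtain ⟨b1, a2, b2, a3, -, hf⟩ := hμ a ha
          rw [hf] at hqa
          by_contra! h
          have := mul_nonpos_of_nonneg_of_nonpos (mul_nonneg
            (by linarith : 0 ≤ x - μ₁ a) (sub_nonneg.2 h)) (by linarith : x - μ₃ a ≤ 0)
          linarith
      · rcases le_or_gt V x with hxV | hxV
        · filter_upwards [hpos] with a ha
          exact (hμ a ha).2.2.1.trans_le hxV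
        · have h0 : 0 < x * (g * H - (V - x) ^ 2) := by
            rw [hq]
            exact mul_pos (by linarith) (mul_pos (by linarith) (by linarith))
          filter_upwards [hpos, evpos x h0] with a ha hqa
          obtain ⟨b1, a2, b2, a3, -, hf⟩ := hμ a ha
          rw [hf] at hqa
          by_contra! h
          have := mul_nonneg_of_nonpos_of_nonpos (mul_nonpos_of_nonneg_of_nonpos
            (by linarith : 0 ≤ x - μ₁ a) (sub_nonpos.2 h)) (by linarith : x - μ₃ a ≤ 0)
          linarith
    refine ⟨?_, t2, t3⟩
    have h := (t2.add t3).const_sub (2 * V)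
    rw [show 2 * V - (V - s + (V + s)) = 0 by ring] at h
    refine h.congr' ?_
    filter_upwards [hpos] with a ha
    linarith [(hμ a ha).2.2.2.2.1]
end
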